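/- arXiv:2111.01213 — 3 statements merged into one kernel-verified Lean document; each statement's English description precedes it below -/
import Mathlib

section
/- Let X be a set and let θ be a map from the Point Algebra to subsets of X×X that preserves complement (θ(-a) = (X×X) \ θ(a) for all Point Algebra elements a) and preserves composition (θ(a;b) = θ(a);θ(b) for all Point Algebra elements a,b), and suppose there exists x₀ ∈ X with (x₀,x₀) ∈ θ(1). Then for every natural number n there exist x₁, x₂, …, xₙ ∈ X such that the points x₀, x₁, …, xₙ are pairwise distinct and for all 0 ≤ i < j ≤ n, (xᵢ, xⱼ) ∈ θ(≤) and (xⱼ, xᵢ) ∈ θ(>). -/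
/-- Relational composition of binary relations given as sets of pairs. -/
def relComp {X : Type*} (R S : Set (X × X)) : Set (X × X) :=
  {p | ∃ y, (p.1, y) ∈ R ∧ (y, p.2) ∈ S}

/-- The Point Algebra: the eight binary relations on ℚ given by
`0`, `1`, `=`, `≠`, `<`, `≤`, `>`, `≥`. -/
def PointAlgebra : Set (Set (ℚ × ℚ)) :=
  { (∅ : Set (ℚ × ℚ)), Set.univ,
    {p | p.1 = p.2}, {p | p.1 ≠ p.2},
    {p | p.1 < p.2}, {p | p.1 ≤ p.2},
    {p | p.1 > p.2}, {p | p.1 ≥ p.2} }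

/-!
Write `L = θ(≤)` and `G = θ(>)`, the complement of `L`. Since `≤;≤` is `≤`, the relation `L` is
transitive, so its strict part `L a b ∧ ¬ L b a` is a strict order. The two expressions
`≤;> = 1 = >;≤` of the full relation make `L;G` and `G;L` equal, and this lets a strictly increasing
chain be continued forever: if `b` lies strictly above `a`, then `(b, b)` is in `G;L` through `a`,
hence in `L;G`, which says exactly that some point lies strictly above `b`.
-/

section StrictChain

variable {X : Type*}

theorem isStrictOrder_and_not_swap (r : X → X → Prop) [IsTrans X r] :
    IsStrictOrder X fun a b => r a b ∧ ¬ r b a where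
  irrefl _ h := h.2 h.1
  trans _ _ _ hab hbc :=
    ⟨_root_.trans hab.1 hbc.1, fun hca => hab.2 (_root_.trans hbc.1 hca)⟩

theorem exists_relEmbedding_nat_lt {r : X → X → Prop} [IsStrictOrder X r]
    (hstep : ∀ a b, r a b → ∃ c, r b c) {a b : X} (hab : r a b) :
    ∃ x : ((· < ·) : ℕ → ℕ → Prop) ↪r r, x 0 = a := by
  have hsucc : ∀ p : {p // ∃ q, r p q}, ∃ q : {p // ∃ q, r p q}, r p q := by
    rintro ⟨p, q, hpq⟩
    exact ⟨⟨q, hstep p q hpq⟩, hpq⟩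
  choose next hnext using hsucc
  let x : ℕ → {p // ∃ q, r p q} := fun n => next^[n] ⟨a, b, hab⟩
  have hx : ∀ n, r (x n) (x (n + 1)) := fun n => by
    simpa only [x, Function.iterate_succ_apply'] using hnext (x n)
  exact ⟨RelEmbedding.natLT (fun n => (x n : X)) hx, rfl⟩

theorem exists_strict_chain_of_relComp_compl {R : Set (X × X)} (htrans : relComp R R ⊆ R)
    (hcomm : relComp Rᶜ R ⊆ relComp R Rᶜ) {a : X} (ha : (a, a) ∈ relComp R Rᶜ) :
    ∃ x : ℕ → X, x 0 = a ∧ Function.Injective x ∧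
      ∀ i j, i < j → (x i, x j) ∈ R ∧ (x j, x i) ∉ R := by
  have : IsTrans X fun p q => (p, q) ∈ R := ⟨fun _ q _ hpq hqs => htrans ⟨q, hpq, hqs⟩⟩
  have := isStrictOrder_and_not_swap fun p q => (p, q) ∈ R
  obtain ⟨b, hab⟩ := ha
  obtain ⟨x, hx⟩ := exists_relEmbedding_nat_lt
    (r := fun p q => (p, q) ∈ R ∧ (q, p) ∉ R)
    (fun p q hpq => hcomm (show (q, q) ∈ relComp Rᶜ R from ⟨p, hpq.2, hpq.1⟩)) hab
  exact ⟨x, hx, x.injective, fun _ _ => x.map_rel_iff.2⟩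

end StrictChain

section OrderRelations

variable {α : Type*}

theorem relComp_le_le [Preorder α] :
    relComp {p : α × α | p.1 ≤ p.2} {p | p.1 ≤ p.2} = {p | p.1 ≤ p.2} := by
  ext ⟨a, b⟩
  exact ⟨fun ⟨_, hac, hcb⟩ => le_trans hac hcb, fun hab => ⟨a, le_rfl, hab⟩⟩

theorem relComp_le_gt [Preorder α] [IsDirectedOrder α] [NoMaxOrder α] :
    relComp {p : α × α | p.1 ≤ p.2} {p | p.1 > p.2} = Set.univ := by
  refine Set.eq_univ_of_forall fun ⟨a, b⟩ => ?_
  obtain ⟨c, hac, hbc⟩ := exists_ge_ge a b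
  obtain ⟨d, hcd⟩ := exists_gt c
  exact ⟨d, hac.trans hcd.le, hbc.trans_lt hcd⟩

theorem relComp_gt_le [Preorder α] [IsCodirectedOrder α] [NoMinOrder α] :
    relComp {p : α × α | p.1 > p.2} {p | p.1 ≤ p.2} = Set.univ := by
  refine Set.eq_univ_of_forall fun ⟨a, b⟩ => ?_
  obtain ⟨c, hca, hcb⟩ := exists_le_le a b
  obtain ⟨d, hdc⟩ := exists_lt c
  exact ⟨d, hdc.trans_le hca, hdc.le.trans hcb⟩

theorem univ_sdiff_le [LinearOrder α] :
    Set.univ \ {p : α × α | p.1 ≤ p.2} = {p | p.1 > p.2} := by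
  ext p
  simp

end OrderRelations

theorem stmt2_general {α X : Type*} [LinearOrder α] [NoMaxOrder α] [NoMinOrder α]
    (θ : Set (α × α) → Set (X × X))
    (hneg : θ (Set.univ \ {p | p.1 ≤ p.2}) = Set.univ \ θ {p | p.1 ≤ p.2})
    (hle_le : θ (relComp {p | p.1 ≤ p.2} {p | p.1 ≤ p.2}) =
      relComp (θ {p | p.1 ≤ p.2}) (θ {p | p.1 ≤ p.2}))
    (hle_gt : θ (relComp {p | p.1 ≤ p.2} {p | p.1 > p.2}) =
      relComp (θ {p | p.1 ≤ p.2}) (θ {p | p.1 > p.2}))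
    (hgt_le : θ (relComp {p | p.1 > p.2} {p | p.1 ≤ p.2}) =
      relComp (θ {p | p.1 > p.2}) (θ {p | p.1 ≤ p.2}))
    (x₀ : X) (hx₀ : (x₀, x₀) ∈ θ Set.univ) :
    ∃ x : ℕ → X, x 0 = x₀ ∧ Function.Injective x ∧
      ∀ i j, i < j → (x i, x j) ∈ θ {p | p.1 ≤ p.2} ∧ (x j, x i) ∈ θ {p | p.1 > p.2} := by
  have hgt : θ {p | p.1 > p.2} = (θ {p | p.1 ≤ p.2})ᶜ := by
    rw [← univ_sdiff_le, hneg, Set.compl_eq_univ_sdiff]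
  rw [relComp_le_le] at hle_le
  rw [relComp_le_gt, hgt] at hle_gt
  rw [relComp_gt_le, hgt] at hgt_le
  rw [hgt]
  exact exists_strict_chain_of_relComp_compl hle_le.ge (hgt_le.symm.trans hle_gt).le
    (hle_gt ▸ hx₀)

theorem le_mem_pointAlgebra : {p : ℚ × ℚ | p.1 ≤ p.2} ∈ PointAlgebra := by
  simp [PointAlgebra]

theorem gt_mem_pointAlgebra : {p : ℚ × ℚ | p.1 > p.2} ∈ PointAlgebra := by
  simp [PointAlgebra]

theorem stmt2 {X : Type*} (θ : Set (ℚ × ℚ) → Set (X × X))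
    (hneg : ∀ a ∈ PointAlgebra, θ (Set.univ \ a) = Set.univ \ θ a)
    (hcomp : ∀ a ∈ PointAlgebra, ∀ b ∈ PointAlgebra,
      θ (relComp a b) = relComp (θ a) (θ b))
    (x₀ : X) (hx₀ : (x₀, x₀) ∈ θ Set.univ) :
    ∀ n : ℕ, ∃ x : Fin (n + 1) → X, x 0 = x₀ ∧ Function.Injective x ∧
      ∀ i j : Fin (n + 1), i < j →
        (x i, x j) ∈ θ {p | p.1 ≤ p.2} ∧ (x j, x i) ∈ θ {p | p.1 > p.2} := by
  obtain ⟨x, hx, hinj, hchain⟩ := stmt2_general θ (hneg _ le_mem_pointAlgebra)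
    (hcomp _ le_mem_pointAlgebra _ le_mem_pointAlgebra)
    (hcomp _ le_mem_pointAlgebra _ gt_mem_pointAlgebra)
    (hcomp _ gt_mem_pointAlgebra _ le_mem_pointAlgebra) x₀ hx₀
  exact fun n => ⟨fun i => x i, hx, hinj.comp Fin.val_injective, fun i j hij => hchain i j hij⟩
end

section
/- Let S be a finite relation algebra with set of atoms A, and let θ : S → P(A×A) be defined by (a,b) ∈ θ(s) ↔ b ≤ a;s. Then θ preserves composition: for all s, t ∈ S, θ(s;t) equals the relational composition θ(s);θ(t) = {(a,c) ∈ A×A | ∃b ∈ A, (a,b) ∈ θ(s) ∧ (b,c) ∈ θ(t)}. -/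
/-- A relation algebra: a Boolean algebra with an associative composition `comp`,
a converse `conv`, and an identity element `one'`, satisfying the standard axioms
including the Peircean law. -/
class RelationAlgebra (S : Type*) extends BooleanAlgebra S where
  comp : S → S → S
  conv : S → S
  one' : S
  comp_assoc : ∀ a b c : S, comp (comp a b) c = comp a (comp b c)
  comp_sup_left : ∀ a b c : S, comp (a ⊔ b) c = comp a c ⊔ comp b c
  comp_sup_right : ∀ a b c : S, comp a (b ⊔ c) = comp a b ⊔ comp a c
  comp_bot : ∀ a : S, comp a ⊥ = ⊥
  bot_comp : ∀ a : S, comp ⊥ a = ⊥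
  comp_one' : ∀ a : S, comp a one' = a
  one'_comp : ∀ a : S, comp one' a = a
  conv_conv : ∀ a : S, conv (conv a) = a
  conv_comp : ∀ a b : S, conv (comp a b) = comp (conv b) (conv a)
  conv_sup : ∀ a b : S, conv (a ⊔ b) = conv a ⊔ conv b
  conv_one' : conv one' = one'
  peirce₁ : ∀ a b c : S, a ⊓ comp b c = ⊥ ↔ b ⊓ comp a (conv c) = ⊥
  peirce₂ : ∀ a b c : S, a ⊓ comp b c = ⊥ ↔ c ⊓ comp (conv b) a = ⊥

open RelationAlgebra

/-- The set of atoms of a relation algebra, as a subtype. -/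
def Atoms (S : Type*) [RelationAlgebra S] : Type _ := {a : S // IsAtom a}

/-- The map `θ : S → ℘(A × A)` given by `(a, b) ∈ θ(s) ↔ b ≤ a ; s`,
where `A` is the set of atoms of `S`. -/
def theta {S : Type*} [RelationAlgebra S] (s : S) : Set (Atoms S × Atoms S) :=
  {p | p.2.val ≤ comp p.1.val s}

section

variable {S : Type*} [RelationAlgebra S]

namespace RelationAlgebra

theorem comp_mono_left (c : S) : Monotone fun a : S => comp a c := by
  intro a b hab
  have hsup : comp a c ⊔ comp b c = comp b c := by
    rw [← comp_sup_left, sup_eq_right.mpr hab]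
  exact sup_eq_right.mp hsup

theorem disjoint_comp_iff_disjoint_comp_conv {a b c : S} :
    Disjoint a (comp b c) ↔ Disjoint b (comp a (conv c)) := by
  simpa only [disjoint_iff] using peirce₁ a b c

theorem le_comp_iff_le_comp_conv {a b c : S} (ha : IsAtom a) (hb : IsAtom b) :
    a ≤ comp b c ↔ b ≤ comp a (conv c) := by
  rw [← ha.not_disjoint_iff_le, ← hb.not_disjoint_iff_le, disjoint_comp_iff_disjoint_comp_conv]

theorem le_comp_iff_exists_atom_le [IsAtomic S] {a x y : S} (ha : IsAtom a) :
    a ≤ comp x y ↔ ∃ b : Atoms S, b.val ≤ x ∧ a ≤ comp b.val y := by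
  constructor
  · intro hle
    -- By Peirce's law, the witnesses `b` are exactly the atoms below `x ⊓ a ; y⌣`.
    have hmeet : ¬Disjoint x (comp a (conv y)) := by
      rwa [← disjoint_comp_iff_disjoint_comp_conv, ha.not_disjoint_iff_le]
    obtain ⟨b, hb, hb_le⟩ :=
      (eq_bot_or_exists_atom_le (x ⊓ comp a (conv y))).resolve_left (mt disjoint_iff.mpr hmeet)
    obtain ⟨hbx, hbay⟩ := le_inf_iff.mp hb_le
    exact ⟨⟨b, hb⟩, hbx, (le_comp_iff_le_comp_conv ha hb).mpr hbay⟩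
  · rintro ⟨b, hbx, hab⟩
    exact hab.trans (comp_mono_left y hbx)

end RelationAlgebra

theorem mem_theta {s : S} {a b : Atoms S} : (a, b) ∈ theta s ↔ b.val ≤ comp a.val s :=
  Iff.rfl

theorem stmt5_general [IsAtomic S] (s t : S) :
    theta (comp s t) =
      {p : Atoms S × Atoms S | ∃ b : Atoms S, (p.1, b) ∈ theta s ∧ (b, p.2) ∈ theta t} := by
  ext ⟨a, c⟩
  calc
    (a, c) ∈ theta (comp s t) ↔ c.val ≤ comp (comp a.val s) t := by rw [mem_theta, comp_assoc]
    _ ↔ ∃ b : Atoms S, b.val ≤ comp a.val s ∧ c.val ≤ comp b.val t :=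
      le_comp_iff_exists_atom_le c.property
    _ ↔ ∃ b : Atoms S, (a, b) ∈ theta s ∧ (b, c) ∈ theta t := by simp only [mem_theta]

end

theorem stmt5 {S : Type*} [RelationAlgebra S] [Finite S] (s t : S) :
    theta (comp s t) =
      {p : Atoms S × Atoms S | ∃ b : Atoms S, (p.1, b) ∈ theta s ∧ (b, p.2) ∈ theta t} :=
  stmt5_general s t
end

section
/- Let S be a finite relation algebra with set of atoms A, and let θ : S → P(A×A) be defined by (a,b) ∈ θ(s) ↔ b ≤ a;s. Then θ is a finite representation of S in every signature of operations from {0, 1, ⊔, 1', ⌣, ;}: θ is injective, θ(0) = ∅, θ(s) ⊆ θ(1) for all s, θ(s ⊔ t) = θ(s) ∪ θ(t), θ(1') = {(a,a) | a ∈ A}, θ(s⌣) is the converse relation of θ(s), and θ(s;t) is the relational composition of θ(s) and θ(t). Consequently, every finite structure in a Relation Algebra reduct signature containing neither {-,;} nor {⊓,;} that embeds into a finite relation algebra is finitely representable. -/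
open RelationAlgebra

/-! For atoms `a` and `b`, the Peircean law turns `b ≤ a ; s⌣` into `a ≤ b ; s`, so `θ` preserves
converse. By the same law an atom `a ≤ s ; t` satisfies `s ⊓ (a ; t⌣) ≠ 0`, and any atom `b` below
this meet satisfies `b ≤ s` and `a ≤ b ; t`. Applied to `(a ; s) ; t`, this shows that `θ`
preserves composition; applied to `1' ; s`, it shows that the atoms below `s` are the second
entries of those pairs in `θ s` whose first entry lies below `1'`, so `θ s` determines `s`. -/

theorem isAtom_le_sup_iff {α : Type*} [DistribLattice α] [OrderBot α] {a b c : α}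
    (ha : IsAtom a) : a ≤ b ⊔ c ↔ a ≤ b ∨ a ≤ c := by
  simp only [← ha.not_disjoint_iff_le, disjoint_sup_right, not_and_or]

namespace RelationAlgebra

variable {S : Type*} [RelationAlgebra S] {a b c s t : S}

theorem comp_right_mono (a : S) : Monotone fun s => comp a s :=
  .of_map_sup (comp_sup_right a)

theorem comp_left_mono (a : S) : Monotone fun s => comp s a :=
  .of_map_sup fun s t => comp_sup_left s t a

theorem disjoint_comp_comm : Disjoint a (comp b c) ↔ Disjoint b (comp a (conv c)) := by
  simpa only [disjoint_iff] using peirce₁ a b c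

theorem atom_le_comp_conv_iff {a b : Atoms S} :
    b.val ≤ comp a.val (conv s) ↔ a.val ≤ comp b.val s := by
  rw [← b.2.not_disjoint_iff_le, ← a.2.not_disjoint_iff_le, disjoint_comp_comm (a := a.val)]

theorem atom_le_comp_iff_exists_atom_le [IsAtomic S] {a : Atoms S} :
    a.val ≤ comp s t ↔ ∃ b : Atoms S, b.val ≤ s ∧ a.val ≤ comp b.val t := by
  constructor
  · intro h
    have inf_ne_bot : s ⊓ comp a.val (conv t) ≠ ⊥ := by
      rwa [← a.2.not_disjoint_iff_le, disjoint_comp_comm, disjoint_iff] at h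
    obtain ⟨b, hb, hle⟩ := (eq_bot_or_exists_atom_le _).resolve_left inf_ne_bot
    obtain ⟨hbs, hbat⟩ := le_inf_iff.1 hle
    exact ⟨⟨b, hb⟩, hbs, atom_le_comp_conv_iff.1 hbat⟩
  · rintro ⟨b, hbs, hab⟩
    exact hab.trans (comp_left_mono t hbs)

end RelationAlgebra

section Theta

variable {S : Type*} [RelationAlgebra S]

theorem theta_bot : theta (⊥ : S) = ∅ := by
  ext ⟨a, b⟩
  simp only [mem_theta, comp_bot, le_bot_iff, b.2.ne_bot, Set.mem_empty_iff_false]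

theorem theta_mono : Monotone (theta : S → Set (Atoms S × Atoms S)) :=
  fun _ _ hst p hp => hp.trans (comp_right_mono p.1.val hst)

theorem theta_sup (s t : S) : theta (s ⊔ t) = theta s ∪ theta t := by
  ext ⟨a, b⟩
  simp only [Set.mem_union, mem_theta, comp_sup_right, isAtom_le_sup_iff b.2]

theorem theta_one' : theta (one' : S) = {p | p.1 = p.2} := by
  ext ⟨a, b⟩
  rw [mem_theta, comp_one', a.2.le_iff_eq b.2.ne_bot]
  exact Subtype.ext_iff.symm.trans eq_comm

theorem theta_conv (s : S) : theta (conv s) = {p | (p.2, p.1) ∈ theta s} := by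
  ext ⟨a, b⟩
  exact atom_le_comp_conv_iff

variable [IsAtomic S]

theorem theta_comp (s t : S) :
    theta (comp s t) = {p | ∃ b : Atoms S, (p.1, b) ∈ theta s ∧ (b, p.2) ∈ theta t} := by
  ext ⟨a, c⟩
  rw [mem_theta, ← comp_assoc]
  exact atom_le_comp_iff_exists_atom_le

theorem atom_le_iff_exists_mem_theta (s : S) (a : Atoms S) :
    a.val ≤ s ↔ ∃ e : Atoms S, e.val ≤ one' ∧ (e, a) ∈ theta s := by
  simpa only [one'_comp, mem_theta] using
    atom_le_comp_iff_exists_atom_le (s := one') (t := s) (a := a)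

theorem theta_injective : Function.Injective (theta : S → Set (Atoms S × Atoms S)) := by
  intro s t hst
  refine BooleanAlgebra.eq_iff_atom_le_iff.2 fun a ha => ?_
  calc a ≤ s
      ↔ ∃ e : Atoms S, e.val ≤ one' ∧ (e, ⟨a, ha⟩) ∈ theta s :=
        atom_le_iff_exists_mem_theta s ⟨a, ha⟩
    _ ↔ ∃ e : Atoms S, e.val ≤ one' ∧ (e, ⟨a, ha⟩) ∈ theta t := by rw [hst]
    _ ↔ a ≤ t := (atom_le_iff_exists_mem_theta t ⟨a, ha⟩).symm

end Theta

theorem stmt12_general {S : Type*} [RelationAlgebra S] [IsAtomic S] :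
    Function.Injective (theta : S → Set (Atoms S × Atoms S)) ∧
    theta (⊥ : S) = (∅ : Set (Atoms S × Atoms S)) ∧
    (∀ s : S, theta s ⊆ theta (⊤ : S)) ∧
    (∀ s t : S, theta (s ⊔ t) = theta s ∪ theta t) ∧
    theta (one' : S) = {p : Atoms S × Atoms S | p.1 = p.2} ∧
    (∀ s : S, theta (conv s) = {p : Atoms S × Atoms S | (p.2, p.1) ∈ theta s}) ∧
    (∀ s t : S, theta (comp s t) =
      {p : Atoms S × Atoms S | ∃ b : Atoms S, (p.1, b) ∈ theta s ∧ (b, p.2) ∈ theta t}) :=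
  ⟨theta_injective, theta_bot, fun _ => theta_mono le_top, theta_sup, theta_one', theta_conv,
    theta_comp⟩

/-- `θ` is a finite representation of a finite relation algebra `S` in every
signature of operations from `{0, 1, ⊔, 1', ⌣, ;}`: it is injective and correctly
represents the constants `⊥`, `⊤`, join, the identity, converse, and composition
as genuine operations on binary relations over the (finite) set of atoms. -/
theorem stmt12 {S : Type*} [RelationAlgebra S] [Finite S] :
    Function.Injective (theta : S → Set (Atoms S × Atoms S)) ∧
    theta (⊥ : S) = (∅ : Set (Atoms S × Atoms S)) ∧
    (∀ s : S, theta s ⊆ theta (⊤ : S)) ∧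
    (∀ s t : S, theta (s ⊔ t) = theta s ∪ theta t) ∧
    theta (one' : S) = {p : Atoms S × Atoms S | p.1 = p.2} ∧
    (∀ s : S, theta (conv s) = {p : Atoms S × Atoms S | (p.2, p.1) ∈ theta s}) ∧
    (∀ s t : S, theta (comp s t) =
      {p : Atoms S × Atoms S | ∃ b : Atoms S, (p.1, b) ∈ theta s ∧ (b, p.2) ∈ theta t}) :=
  stmt12_general
end
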